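/- Let m > 0 and let ξ satisfy 1 ≤ ξ ≤ 1/c(m). Let α, β be real numbers with α < 0 < β and |α| ≤ m, and suppose ε₁, ε₃ are real numbers satisfying ε₃ − ε₁ = α + β and h(ε₁) + h(ε₃) = h(α) + h(β). Then ξ·|ε₁| + w·|ε₃| − ξ·|α| − β + ξ(ξ − 1)|ε₁| ≤ 0, where w = ξ if ε₃ < 0 and w = 1 if ε₃ ≥ 0. -/

import Mathlib

/-- The function `h` from the paper: `h(ε) = ε` if `ε ≥ 0`, `h(ε) = sinh ε` if `ε < 0`. -/
noncomputable def hfun (ε : ℝ) : ℝ := if 0 ≤ ε then ε else Real.sinh ε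

/-- The function `c` from the paper: `c(z) = (cosh z − 1)/(cosh z + 1)`. -/
noncomputable def cfun (z : ℝ) : ℝ := (Real.cosh z - 1) / (Real.cosh z + 1)

/-!
With `a = α⁻`, `b = ε₃⁻` and `e = ε₁⁻`, the reflected wave being a shock, eliminating `β` turns the
relation between the `h`-strengths into `sinh e + e + (sinh b - b) = sinh a - a`. As `e ≤ sinh e`
and `sinh` has slope at most `cosh a` between `b` and `a`, this gives
`2 * e ≤ (cosh a - 1) * (a - b)`. The left-hand side of the estimate factors as
`(ξ + 1) * ((ξ - 1) * e + b - a)`, which is nonpositive because `ξ ≤ 1 / c(a)` amounts to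
`(ξ - 1) * (cosh a - 1) ≤ 2`.
-/

section HyperbolicInequalities

open Real

variable {a b e k : ℝ}

lemma sinh_sub_sinh_le_cosh_mul_sub (hb : -a ≤ b) (hba : b ≤ a) :
    sinh a - sinh b ≤ cosh a * (a - b) := by
  have deriv_le : ∀ x ∈ interior (Set.Icc b a), deriv sinh x ≤ cosh a := by
    intro x hx
    rw [interior_Icc] at hx
    rw [Real.deriv_sinh, cosh_le_cosh]
    exact (abs_le.2 ⟨hb.trans hx.1.le, hx.2.le⟩).trans (le_abs_self a)
  exact (convex_Icc b a).image_sub_le_mul_sub_of_deriv_le continuous_sinh.continuousOn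
    differentiable_sinh.differentiableOn deriv_le b ⟨le_rfl, hba⟩ a ⟨hba, le_rfl⟩ hba

lemma le_of_sinh_add_self_add_le (he : 0 ≤ e)
    (h : sinh e + e + (sinh b - b) ≤ sinh a - a) : b ≤ a := by
  have sinh_nonneg : 0 ≤ sinh e := sinh_nonneg_iff.2 he
  exact sinh_sub_id_strictMono.le_iff_le.1 (by linarith)

lemma two_mul_le_cosh_sub_one_mul_sub (he : 0 ≤ e) (hb : 0 ≤ b)
    (h : sinh e + e + (sinh b - b) ≤ sinh a - a) : 2 * e ≤ (cosh a - 1) * (a - b) := by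
  have hba : b ≤ a := le_of_sinh_add_self_add_le he h
  calc 2 * e ≤ sinh e + e := by linarith [self_le_sinh_iff.2 he]
    _ ≤ (sinh a - sinh b) - (a - b) := by linarith
    _ ≤ cosh a * (a - b) - (a - b) := by
      gcongr
      exact sinh_sub_sinh_le_cosh_mul_sub (by linarith) hba
    _ = (cosh a - 1) * (a - b) := by ring

lemma mul_add_le_of_mul_cosh_sub_one_le_two (he : 0 ≤ e) (hb : 0 ≤ b)
    (hk : k * (cosh a - 1) ≤ 2) (h : sinh e + e + (sinh b - b) ≤ sinh a - a) :
    k * e + b ≤ a := by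
  have hba : b ≤ a := le_of_sinh_add_self_add_le he h
  rcases le_total k 0 with hk_nonpos | hk_nonneg
  · linarith [mul_nonpos_of_nonpos_of_nonneg hk_nonpos he]
  · have two_mul_le : 2 * (k * e) ≤ 2 * (a - b) :=
      calc 2 * (k * e) = k * (2 * e) := by ring
        _ ≤ k * ((cosh a - 1) * (a - b)) :=
          mul_le_mul_of_nonneg_left (two_mul_le_cosh_sub_one_mul_sub he hb h) hk_nonneg
        _ = k * (cosh a - 1) * (a - b) := by ring
        _ ≤ 2 * (a - b) := mul_le_mul_of_nonneg_right hk (sub_nonneg.2 hba)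
    linarith

end HyperbolicInequalities

section Cfun

open Real

variable {x y ξ : ℝ}

lemma cfun_pos (hx : x ≠ 0) : 0 < cfun x := by
  have one_lt : 1 < cosh x := one_lt_cosh.2 hx
  exact div_pos (by linarith) (by linarith)

lemma cfun_le_cfun (hxy : |x| ≤ |y|) : cfun x ≤ cfun y := by
  have cosh_le : cosh x ≤ cosh y := cosh_le_cosh.2 hxy
  rw [cfun, cfun, div_le_div_iff₀ (by linarith [cosh_pos x]) (by linarith [cosh_pos y])]
  linarith

lemma le_one_div_cfun_iff (hx : x ≠ 0) :
    ξ ≤ 1 / cfun x ↔ (ξ - 1) * (cosh x - 1) ≤ 2 := by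
  have one_lt : 1 < cosh x := one_lt_cosh.2 hx
  rw [cfun, one_div_div, le_div_iff₀ (by linarith)]
  constructor <;> intro h <;> linarith

end Cfun

section WaveInteraction

open Real

variable {α β ε₁ ε₃ : ℝ}

lemma hfun_of_nonneg {x : ℝ} (hx : 0 ≤ x) : hfun x = x := if_pos hx

lemma hfun_eq_self_sub_negPart (x : ℝ) : hfun x = x - (sinh x⁻ - x⁻) := by
  rcases le_or_gt 0 x with hx | hx
  · rw [hfun_of_nonneg hx, negPart_eq_zero.2 hx, sinh_zero, sub_zero, sub_zero]
  · rw [hfun, if_neg hx.not_ge, negPart_eq_neg.2 hx.le, sinh_neg]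
    ring

lemma monotone_hfun_sub_id : Monotone fun x => hfun x - x := by
  intro x y hxy
  have := sinh_sub_id_strictMono.monotone (negPart_anti hxy)
  simp only [hfun_eq_self_sub_negPart] at this ⊢
  linarith

lemma ite_neg_mul_abs_eq_add_negPart (ξ x : ℝ) :
    (if x < 0 then ξ else 1) * |x| = x + (ξ + 1) * x⁻ := by
  split_ifs with hx
  · rw [abs_of_neg hx, negPart_eq_neg.2 hx.le]
    ring
  · rw [abs_of_nonneg (not_lt.1 hx), negPart_eq_zero.2 (not_lt.1 hx)]
    ring

lemma reflected_wave_nonpos (hβ : 0 ≤ β) (h1 : ε₃ - ε₁ = α + β)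
    (h2 : hfun ε₁ + hfun ε₃ = hfun α + hfun β) : ε₁ ≤ 0 := by
  by_contra! hε₁
  have le_sub : hfun α - α ≤ hfun ε₃ - ε₃ := monotone_hfun_sub_id (by linarith)
  rw [hfun_of_nonneg hε₁.le, hfun_of_nonneg hβ] at h2
  linarith

lemma sinh_negPart_balance (hβ : 0 ≤ β) (h1 : ε₃ - ε₁ = α + β)
    (h2 : hfun ε₁ + hfun ε₃ = hfun α + hfun β) :
    sinh ε₁⁻ + ε₁⁻ + (sinh ε₃⁻ - ε₃⁻) = sinh α⁻ - α⁻ := by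
  have negPart_ε₁ : ε₁⁻ = -ε₁ := negPart_eq_neg.2 (reflected_wave_nonpos hβ h1 h2)
  rw [hfun_of_nonneg hβ] at h2
  simp only [hfun_eq_self_sub_negPart] at h2
  linarith

end WaveInteraction

theorem stmt8_general (ξ α β ε₁ ε₃ : ℝ) (hξ1 : -1 ≤ ξ) (hξ2 : ξ ≤ 1 / cfun α)
    (hα : α < 0) (hβ : 0 ≤ β) (h1 : ε₃ - ε₁ = α + β)
    (h2 : hfun ε₁ + hfun ε₃ = hfun α + hfun β) :
    ξ * |ε₁| + (if ε₃ < 0 then ξ else 1) * |ε₃| - ξ * |α| - β + ξ * (ξ - 1) * |ε₁| ≤ 0 := by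
  have hε₁ : ε₁ ≤ 0 := reflected_wave_nonpos hβ h1 h2
  have negPart_α : α⁻ = -α := negPart_eq_neg.2 hα.le
  have negPart_ε₁ : ε₁⁻ = -ε₁ := negPart_eq_neg.2 hε₁
  have weight_le : (ξ - 1) * (Real.cosh α⁻ - 1) ≤ 2 := by
    rw [negPart_α, Real.cosh_neg]
    exact (le_one_div_cfun_iff hα.ne).1 hξ2
  have strength_le : (ξ - 1) * ε₁⁻ + ε₃⁻ ≤ α⁻ :=
    mul_add_le_of_mul_cosh_sub_one_le_two (negPart_nonneg ε₁) (negPart_nonneg ε₃) weight_le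
      (sinh_negPart_balance hβ h1 h2).le
  calc ξ * |ε₁| + (if ε₃ < 0 then ξ else 1) * |ε₃| - ξ * |α| - β + ξ * (ξ - 1) * |ε₁|
      = (ξ + 1) * ((ξ - 1) * ε₁⁻ + ε₃⁻ - α⁻) := by
        rw [ite_neg_mul_abs_eq_add_negPart, abs_of_nonpos hε₁, abs_of_neg hα, negPart_α,
          negPart_ε₁, ← sub_eq_of_eq_add' h1]
        ring
    _ ≤ 0 := mul_nonpos_of_nonneg_of_nonpos (by linarith) (sub_nonpos.2 strength_le)

/-- The estimate `ΔL + ξ(ξ−1)|ε₁| ≤ 0` for the interaction of a shock `α` with a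
rarefaction `β` of the same family. -/
theorem stmt8 (m ξ α β ε₁ ε₃ : ℝ) (hm : 0 < m)
    (hξ1 : 1 ≤ ξ) (hξ2 : ξ ≤ 1 / cfun m)
    (hα : α < 0) (hβ : 0 < β) (hαm : |α| ≤ m)
    (h1 : ε₃ - ε₁ = α + β)
    (h2 : hfun ε₁ + hfun ε₃ = hfun α + hfun β) :
    ξ * |ε₁| + (if ε₃ < 0 then ξ else 1) * |ε₃| - ξ * |α| - β + ξ * (ξ - 1) * |ε₁| ≤ 0 := by
  exact stmt8_general ξ α β ε₁ ε₃ (by linarith) (hξ2.trans (one_div_le_one_div_of_le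
    (cfun_pos hα.ne) (cfun_le_cfun (hαm.trans (le_abs_self m))))) hα hβ.le h1 h2
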